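/- Let N ∈ ℕ, N ≥ 1, β = i − 1 and D = {0, 1, −1, i, −i}. If a Gaussian integer x ∈ ℤ[i] has a 3-NAF (β, D)-representation containing exactly N nonzero digits, then x has at most r_N optimal representations, where (r_N) is defined by r_0 = r_1 = 1, r_2 = 3, r_3 = 8, r_4 = 17 and r_{N+3} = r_{N+2} + 2 r_{N+1} + 2 r_N for N ≥ 2. -/

import Mathlib

/-!
Every optimal representation has weight at most `N`, so it suffices to count normalized
representations of weight at most `N`. Peeling off least significant digits one at a time leaves
small carries: if `z = s + β³ t` with `s` a unit, then a representation of `c + z` arises from one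
of some `c' + t`, at the cost of the nonzero digits spent on the way. The carries stay in a finite
box, on which adding `c` lowers the minimal weight by at most `deficit c ≤ 2`. Hence the count at
`c + z` for the smallest weight not excluded by the deficit (`critCount`) is bounded by the
critical counts of `t` alone, and the only carries that matter are `0`, the units `u` and the
corners `(1 - i) u`.
If `a` denotes the critical counts of `t`, `b` those of `z`, and `p = a s`, `q = a (-i s)`,
`d = a ((1 - i) s)`, then

* `b 0 ≤ a 0 + 2 p + 2 q + d`,
* `b s ≤ p + q + d`, `b (i s) ≤ p`, `b (-s) ≤ a 0`, `b (-i s) ≤ q`,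
* `b ((1 - i) s) ≤ q`, `b ((1 - i) i s) ≤ p`, and `b` vanishes at the other two corners.

The linear inequalities `CritBounds` are preserved by this system, because of the recurrence
of `r_N`.
-/

open Matrix

noncomputable section

/-- The imaginary unit `i` in the Gaussian integers. -/
def gI : GaussianInt := ⟨0, 1⟩

/-- The base `β = i - 1`. -/
def gβ : GaussianInt := ⟨-1, 1⟩

/-- The digit set `D = {0, 1, -1, i, -i}`. -/
def gD : Set GaussianInt := {0, 1, -1, gI, -gI}

/-- Value of a digit string `d_{n-1} ⋯ d_0`, given as a list with the least
significant digit first: `gval [d_0, d_1, …, d_{n-1}] = Σ d_j β^j`. -/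
def gval (l : List GaussianInt) : GaussianInt :=
  l.foldr (fun d acc => d + gβ * acc) 0

/-- `l` (least significant digit first) is a `(β, D)`-representation of `x`. -/
def gIsRep (x : GaussianInt) (l : List GaussianInt) : Prop :=
  (∀ d ∈ l, d ∈ gD) ∧ gval l = x

/-- A representation is normalized if it is empty or its leading digit
(the last entry of the LSD-first list) is nonzero. -/
def gNormalized (l : List GaussianInt) : Prop := l.getLast? ≠ some 0

/-- Number of nonzero digits (Hamming weight). -/
def gweight (l : List GaussianInt) : ℕ := (l.filter (fun d => d ≠ 0)).length

/-- `W`-NAF property: among any `W` consecutive digits at most one is nonzero. -/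
def gNAF (W : ℕ) (l : List GaussianInt) : Prop :=
  ∀ j k : ℕ, j < k → k < j + W → l.getD j 0 ≠ 0 → l.getD k 0 = 0

/-- A representation of `x` is optimal if it is normalized and its number of
nonzero digits is minimal among all representations of `x`. -/
def gOptimal (x : GaussianInt) (l : List GaussianInt) : Prop :=
  gIsRep x l ∧ gNormalized l ∧
    ∀ l' : List GaussianInt, gIsRep x l' → gweight l ≤ gweight l'

/-- The number of optimal representations of `x`. -/
def gnumOpt (x : GaussianInt) : ℕ := Nat.card {l : List GaussianInt // gOptimal x l}

/-- The sequence `r_N`: `r_0 = r_1 = 1`, `r_2 = 3`, `r_3 = 8`, `r_4 = 17`,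
and `r_{N+3} = r_{N+2} + 2 r_{N+1} + 2 r_N` for `N ≥ 2`. -/
def rseq : ℕ → ℕ
  | 0 => 1
  | 1 => 1
  | 2 => 3
  | 3 => 8
  | 4 => 17
  | (n + 5) => rseq (n + 4) + 2 * rseq (n + 3) + 2 * rseq (n + 2)

/-! ### Divisibility by the base -/

/-- The nonzero digits, which are the units of the Gaussian integers. -/
def unitDigits : Finset GaussianInt := {1, -1, gI, -gI}

lemma mem_gD_iff {d : GaussianInt} : d ∈ gD ↔ d = 0 ∨ d ∈ unitDigits := by
  simp [gD, unitDigits]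

lemma ne_zero_of_mem_unitDigits : ∀ d ∈ unitDigits, d ≠ 0 := by decide

lemma neg_mem_unitDigits : ∀ d ∈ unitDigits, -d ∈ unitDigits := by decide

lemma gI_mul_mem_unitDigits : ∀ d ∈ unitDigits, gI * d ∈ unitDigits := by decide

lemma gI_mul_gI_mul (x : GaussianInt) : gI * (gI * x) = -x := by
  ext <;> simp [gI]

lemma eq_rotation_of_mem_unitDigits : ∀ s ∈ unitDigits, ∀ u ∈ unitDigits,
    u = s ∨ u = gI * s ∨ u = -s ∨ u = -(gI * s) := by decide

lemma gβ_ne_zero : gβ ≠ 0 := by decide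

lemma gβ_dvd_iff {x : GaussianInt} : gβ ∣ x ↔ Even (x.re + x.im) := by
  constructor
  · rintro ⟨y, rfl⟩
    exact ⟨-y.im, by simp only [gβ, Zsqrtd.re_mul, Zsqrtd.im_mul]; ring⟩
  · rintro ⟨k, hk⟩
    refine ⟨⟨x.im - k, -k⟩, ?_⟩
    ext <;> simp only [gβ, Zsqrtd.re_mul, Zsqrtd.im_mul] <;> linarith

instance : DecidablePred (gβ ∣ ·) := fun _ => decidable_of_iff' _ gβ_dvd_iff

lemma not_gβ_dvd_of_mem_unitDigits : ∀ d ∈ unitDigits, ¬ gβ ∣ d := by decide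

lemma gβ_dvd_sub {x y : GaussianInt} (hx : ¬ gβ ∣ x) (hy : ¬ gβ ∣ y) : gβ ∣ x - y := by
  rw [gβ_dvd_iff, Int.not_even_iff_odd] at hx hy
  rw [gβ_dvd_iff, Zsqrtd.re_sub, Zsqrtd.im_sub, sub_add_sub_comm]
  exact hx.sub_odd hy

/-! ### Digit strings -/

lemma gval_cons (d : GaussianInt) (l : List GaussianInt) :
    gval (d :: l) = d + gβ * gval l := rfl

lemma gweight_cons (d : GaussianInt) (l : List GaussianInt) :
    gweight (d :: l) = gweight l + gweight [d] := by
  by_cases hd : d = 0 <;> simp [gweight, hd]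

lemma gweight_singleton_zero : gweight [0] = 0 := by simp [gweight]

lemma gweight_singleton_of_ne_zero {d : GaussianInt} (hd : d ≠ 0) : gweight [d] = 1 := by
  simp [gweight, hd]

lemma gNormalized.of_cons {d : GaussianInt} {l : List GaussianInt} (h : gNormalized (d :: l)) :
    gNormalized l := by
  cases l with
  | nil => simp [gNormalized]
  | cons e l => simpa [gNormalized, List.getLast?_cons_cons] using h

lemma eq_zero_of_gβ_dvd_gval_cons {d : GaussianInt} {l : List GaussianInt} (hd : d ∈ gD)
    (h : gβ ∣ gval (d :: l)) : d = 0 := by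
  rw [gval_cons, dvd_add_left (dvd_mul_right _ _)] at h
  exact (mem_gD_iff.1 hd).resolve_right fun hu => not_gβ_dvd_of_mem_unitDigits d hu h

lemma eq_nil_of_gIsRep_zero {l : List GaussianInt} (hrep : gIsRep 0 l) (hn : gNormalized l) :
    l = [] := by
  induction l with
  | nil => rfl
  | cons d l ih =>
    obtain ⟨hD, hv⟩ := hrep
    obtain rfl := eq_zero_of_gβ_dvd_gval_cons (hD d List.mem_cons_self) (hv ▸ dvd_zero gβ)
    have hl : gval l = 0 := by simpa [gval_cons, gβ_ne_zero] using hv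
    obtain rfl := ih ⟨fun e he => hD e (List.mem_cons_of_mem _ he), hl⟩ hn.of_cons
    simp [gNormalized] at hn

/-! ### Counting representations of bounded weight -/

/-- The normalized representations of `x` with fewer than `k` nonzero digits. The bound is strict
so that a truncated budget `k - w` with `k ≤ w` admits no representation at all. -/
def repSet (x : GaussianInt) (k : ℕ) : Set (List GaussianInt) :=
  {l | gIsRep x l ∧ gNormalized l ∧ gweight l < k}

/-- The number of normalized representations of `x` with fewer than `k` nonzero digits. -/
def repCount (x : GaussianInt) (k : ℕ) : ℕ := (repSet x k).ncard

lemma repSet_zero_right (x : GaussianInt) : repSet x 0 = ∅ := by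
  simp [repSet]

lemma repSet_zero_subset (k : ℕ) : repSet 0 k ⊆ {[]} :=
  fun _ ⟨hrep, hn, _⟩ => eq_nil_of_gIsRep_zero hrep hn

lemma repSet_gβ_mul_subset {y : GaussianInt} (hy : y ≠ 0) (k : ℕ) :
    repSet (gβ * y) k ⊆ List.cons 0 '' repSet y k := by
  rintro (_ | ⟨d, l⟩) ⟨⟨hD, hv⟩, hn, hw⟩
  · exact absurd hv.symm (mul_ne_zero gβ_ne_zero hy)
  · obtain rfl := eq_zero_of_gβ_dvd_gval_cons (hD d List.mem_cons_self) (hv ▸ dvd_mul_right _ _)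
    have hl : gval l = y := by simpa [gval_cons, gβ_ne_zero] using hv
    rw [gweight_cons, gweight_singleton_zero] at hw
    exact ⟨l, ⟨⟨fun e he => hD e (List.mem_cons_of_mem _ he), hl⟩, hn.of_cons, hw⟩, rfl⟩

lemma repSet_subset_of_not_dvd {x : GaussianInt} (hx : ¬ gβ ∣ x) (k : ℕ) :
    repSet x k ⊆ ⋃ d ∈ unitDigits, List.cons d '' repSet ((x - d) / gβ) (k - 1) := by
  rintro (_ | ⟨d, l⟩) ⟨⟨hD, rfl⟩, hn, hw⟩
  · exact absurd (dvd_zero gβ) hx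
  · have hd : d ∈ unitDigits := (mem_gD_iff.1 (hD d List.mem_cons_self)).resolve_left <| by
      rintro rfl
      exact hx (by simp [gval_cons])
    have hl : gval l = (gval (d :: l) - d) / gβ := by
      rw [gval_cons, add_sub_cancel_left, mul_div_cancel_left₀ _ gβ_ne_zero]
    rw [gweight_cons, gweight_singleton_of_ne_zero (ne_zero_of_mem_unitDigits d hd)] at hw
    exact Set.mem_biUnion hd
      ⟨l, ⟨⟨fun e he => hD e (List.mem_cons_of_mem _ he), hl⟩, hn.of_cons, by omega⟩, rfl⟩

lemma exists_eq_gβ_pow_mul {x : GaussianInt} (hx : x ≠ 0) : ∃ n y, x = gβ ^ n * y ∧ ¬ gβ ∣ y := by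
  have hunit : ¬ IsUnit gβ := by
    rw [isUnit_iff_dvd_one]
    decide
  exact ⟨_, (FiniteMultiplicity.of_not_isUnit hunit hx).exists_eq_pow_mul_and_not_dvd⟩

lemma repSet_finite (x : GaussianInt) (k : ℕ) : (repSet x k).Finite := by
  induction k generalizing x with
  | zero => simp [repSet_zero_right]
  | succ k ih =>
    rcases eq_or_ne x 0 with rfl | hx
    · exact (Set.finite_singleton _).subset (repSet_zero_subset _)
    obtain ⟨n, y, rfl, hy⟩ := exists_eq_gβ_pow_mul hx
    clear hx
    induction n with
    | zero =>
      rw [pow_zero, one_mul]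
      exact (unitDigits.finite_toSet.biUnion fun d _ => (ih _).image _).subset
        (repSet_subset_of_not_dvd hy _)
    | succ n ihn =>
      have hy0 : y ≠ 0 := fun h => hy (h ▸ dvd_zero gβ)
      rw [pow_succ', mul_assoc]
      exact (ihn.image _).subset
        (repSet_gβ_mul_subset (mul_ne_zero (pow_ne_zero n gβ_ne_zero) hy0) _)

lemma repCount_zero_right (x : GaussianInt) : repCount x 0 = 0 := by
  rw [repCount, repSet_zero_right, Set.ncard_empty]

lemma repCount_zero_le_one (k : ℕ) : repCount 0 k ≤ 1 := by
  simpa [repCount] using Set.ncard_le_ncard (repSet_zero_subset k)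

lemma repCount_gβ_mul_le (y : GaussianInt) (k : ℕ) : repCount (gβ * y) k ≤ repCount y k := by
  rcases eq_or_ne y 0 with rfl | hy
  · rw [mul_zero]
  · exact (Set.ncard_le_ncard (repSet_gβ_mul_subset hy k) ((repSet_finite y k).image _)).trans
      (Set.ncard_image_le (repSet_finite y k))

lemma repCount_le_sum_of_not_dvd {x : GaussianInt} (hx : ¬ gβ ∣ x) (k : ℕ) :
    repCount x k ≤ ∑ d ∈ unitDigits, repCount ((x - d) / gβ) (k - 1) := by
  have hfin := unitDigits.finite_toSet.biUnion fun d _ =>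
    (repSet_finite ((x - d) / gβ) (k - 1)).image (List.cons d)
  calc repCount x k
      ≤ (⋃ d ∈ unitDigits, List.cons d '' repSet ((x - d) / gβ) (k - 1)).ncard :=
        Set.ncard_le_ncard (repSet_subset_of_not_dvd hx k) hfin
    _ ≤ ∑ d ∈ unitDigits, (List.cons d '' repSet ((x - d) / gβ) (k - 1)).ncard :=
        Finset.set_ncard_biUnion_le _ _
    _ ≤ ∑ d ∈ unitDigits, repCount ((x - d) / gβ) (k - 1) :=
        Finset.sum_le_sum fun d _ => Set.ncard_image_le (repSet_finite _ _)

/-! ### Propagation of carries -/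

/-- The multiset of outcomes `(c', w)` of reading the `j` least significant digits of a
representation of `c + β ^ j * t`: a representation of `c' + t` remains, and `w` nonzero digits
have been read. -/
def transitions : ℕ → GaussianInt → Multiset (GaussianInt × ℕ)
  | 0, c => {(c, 0)}
  | j + 1, c =>
    if gβ ∣ c then transitions j (c / gβ)
    else unitDigits.val.bind fun d =>
      (transitions j ((c - d) / gβ)).map fun p => (p.1, p.2 + 1)

lemma add_gβ_pow_succ_mul {c : GaussianInt} (hc : gβ ∣ c) (j : ℕ) (t : GaussianInt) :
    c + gβ ^ (j + 1) * t = gβ * (c / gβ + gβ ^ j * t) := by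
  rw [mul_add, EuclideanDomain.mul_div_cancel' gβ_ne_zero hc, pow_succ', mul_assoc]

lemma repCount_le_sum_transitions (j : ℕ) (c t : GaussianInt) (k : ℕ) :
    repCount (c + gβ ^ j * t) k
      ≤ ((transitions j c).map fun p => repCount (p.1 + t) (k - p.2)).sum := by
  induction j generalizing c k with
  | zero => simp [transitions]
  | succ j ih =>
    by_cases hc : gβ ∣ c
    · rw [transitions, if_pos hc, add_gβ_pow_succ_mul hc]
      exact (repCount_gβ_mul_le _ _).trans (ih _ _)
    have hx : ¬ gβ ∣ c + gβ ^ (j + 1) * t := by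
      rwa [pow_succ', mul_assoc, dvd_add_left (dvd_mul_right _ _)]
    have hdiv : ∀ d ∈ unitDigits,
        (c + gβ ^ (j + 1) * t - d) / gβ = (c - d) / gβ + gβ ^ j * t := fun d hd => by
      rw [add_sub_right_comm,
        add_gβ_pow_succ_mul (gβ_dvd_sub hc (not_gβ_dvd_of_mem_unitDigits d hd)),
        mul_div_cancel_left₀ _ gβ_ne_zero]
    rw [transitions, if_neg hc, Multiset.map_bind, Multiset.sum_bind]
    refine (repCount_le_sum_of_not_dvd hx k).trans (Finset.sum_le_sum fun d hd => ?_)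
    rw [hdiv d hd, Multiset.map_map]
    simpa only [Function.comp_apply, Nat.sub_sub, Nat.add_comm 1] using ih ((c - d) / gβ) (k - 1)

/-- The number of digits of a block of a 3-NAF with least significant digit `s`: a 3-NAF is a
concatenation of the blocks `0` and `00s` with `s` a unit. -/
def blockLength (s : GaussianInt) : ℕ := if s = 0 then 1 else 3

/-- `IsNafValue z N`: the Gaussian integer `z` is the value of a 3-NAF of weight `N`. -/
inductive IsNafValue : GaussianInt → ℕ → Prop
  | zero : IsNafValue 0 0
  | block {t s : GaussianInt} {N : ℕ} (hs : s ∈ gD) (ht : IsNafValue t N) :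
      IsNafValue (s + gβ ^ blockLength s * t) (N + gweight [s])

/-- The Gaussian integers with both coordinates in `[-2, 2]`, a set that contains all carries
arising from `0` when a 3-NAF is read block by block. -/
def carries : Finset GaussianInt :=
  (Finset.Icc (-2) 2 ×ˢ Finset.Icc (-2) 2).image fun p => ⟨p.1, p.2⟩

/-- For `c ∈ carries`, an upper bound for the drop of the minimal weight when `c` is added to a
Gaussian integer, with values found by computation. -/
def deficit (c : GaussianInt) : ℕ :=
  if c = 0 then 0 else if c.norm ≤ 4 then 1 else 2

lemma deficit_pos {c : GaussianInt} (hc : c ≠ 0) : 0 < deficit c := by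
  rw [deficit, if_neg hc]
  split_ifs <;> norm_num

lemma deficit_transitions {s c : GaussianInt} (hs : s ∈ gD) (hc : c ∈ carries) :
    ∀ p ∈ transitions (blockLength s) (c + s),
      p.1 ∈ carries ∧ deficit p.1 + gweight [s] ≤ deficit c + p.2 := by
  have hcheck : ∀ s ∈ insert 0 unitDigits, ∀ c ∈ carries,
      ∀ p ∈ transitions (blockLength s) (c + s),
        p.1 ∈ carries ∧ deficit p.1 + gweight [s] ≤ deficit c + p.2 := by decide +kernel
  exact hcheck s (Finset.mem_insert.2 (mem_gD_iff.1 hs)) c hc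

lemma repCount_block_le (s c t : GaussianInt) (k : ℕ) :
    repCount (c + (s + gβ ^ blockLength s * t)) k
      ≤ ((transitions (blockLength s) (c + s)).map fun p => repCount (p.1 + t) (k - p.2)).sum := by
  rw [← add_assoc]
  exact repCount_le_sum_transitions _ _ _ _

/-- For `c = 0` this is the optimality of the 3-NAF. -/
lemma IsNafValue.repCount_add_eq_zero {z : GaussianInt} {N : ℕ} (hz : IsNafValue z N)
    {c : GaussianInt} (hc : c ∈ carries) {k : ℕ} (hk : k ≤ N - deficit c) :
    repCount (c + z) k = 0 := by
  induction hz generalizing c k with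
  | zero =>
    obtain rfl : k = 0 := by omega
    exact repCount_zero_right _
  | @block t s N hs _ ih =>
    refine Nat.eq_zero_of_le_zero ((repCount_block_le s c t k).trans_eq ?_)
    refine Multiset.sum_eq_zero fun n hn => ?_
    obtain ⟨p, hp, rfl⟩ := Multiset.mem_map.1 hn
    obtain ⟨hpc, hdef⟩ := deficit_transitions hs hc p hp
    exact ih hpc (by omega)

/-! ### Critical counts -/

/-- The number of representations of `c + z` of the smallest weight not excluded by
`IsNafValue.repCount_add_eq_zero`, where `N` is the weight of the 3-NAF of `z`. -/
def critCount (z : GaussianInt) (N : ℕ) (c : GaussianInt) : ℕ :=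
  repCount (c + z) (N + 1 - deficit c)

/-- The carries into `t` that contribute to the critical count of `s + β ^ blockLength s * t` at
the carry `c`: those for which the inequality of `deficit_transitions` is sharp. -/
def critCarries (s c : GaussianInt) : Multiset GaussianInt :=
  ((transitions (blockLength s) (c + s)).filter fun p =>
    deficit p.1 + gweight [s] = deficit c + p.2).map Prod.fst

lemma sum_map_le_sum_map_filter {α : Type*} {S : Multiset α} {P : α → Prop} [DecidablePred P]
    {f g : α → ℕ} (hle : ∀ x ∈ S, P x → f x ≤ g x) (hzero : ∀ x ∈ S, ¬ P x → f x = 0) :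
    (S.map f).sum ≤ ((S.filter P).map g).sum := by
  have hnot : ((S.filter (¬ P ·)).map f).sum = 0 := by
    refine Multiset.sum_eq_zero fun n hn => ?_
    obtain ⟨x, hx, rfl⟩ := Multiset.mem_map.1 hn
    exact hzero x (Multiset.mem_filter.1 hx).1 (Multiset.mem_filter.1 hx).2
  calc (S.map f).sum
      = ((S.filter P).map f).sum + ((S.filter (¬ P ·)).map f).sum := by
        rw [← Multiset.sum_add, ← Multiset.map_add, Multiset.filter_add_not]
    _ ≤ ((S.filter P).map g).sum := by
        rw [hnot, add_zero]
        exact Multiset.sum_map_le_sum_map f g fun x hx =>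
          hle x (Multiset.mem_filter.1 hx).1 (Multiset.mem_filter.1 hx).2

lemma critCount_block_le {s t c : GaussianInt} {N : ℕ} (hs : s ∈ gD) (ht : IsNafValue t N)
    (hc : c ∈ carries) :
    critCount (s + gβ ^ blockLength s * t) (N + gweight [s]) c
      ≤ ((critCarries s c).map (critCount t N)).sum := by
  refine (repCount_block_le s c t _).trans ?_
  rw [critCarries, Multiset.map_map]
  refine sum_map_le_sum_map_filter (fun p _ hsharp => ?_) fun p hp hsharp => ?_
  · rw [Function.comp_apply, critCount]
    exact (congrArg _ (by omega)).le
  · obtain ⟨hpc, hdef⟩ := deficit_transitions hs hc p hp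
    exact ht.repCount_add_eq_zero hpc (by omega)

section ZeroBlock

variable {t u : GaussianInt} {N : ℕ}

lemma critCount_gβ_mul_le {c : GaussianInt} (ht : IsNafValue t N) (hc : c ∈ carries) :
    critCount (gβ * t) N c ≤ ((critCarries 0 c).map (critCount t N)).sum := by
  simpa [blockLength, gweight_singleton_zero] using
    critCount_block_le (mem_gD_iff.2 (.inl rfl)) ht hc

lemma critCount_gβ_mul_zero_le (ht : IsNafValue t N) :
    critCount (gβ * t) N 0 ≤ critCount t N 0 := by
  have hcrit : critCarries 0 0 = {0} := by decide +kernel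
  simpa [hcrit] using critCount_gβ_mul_le ht (c := 0) (by decide)

lemma critCount_gβ_mul_unit (ht : IsNafValue t N) (hu : u ∈ unitDigits) :
    critCount (gβ * t) N u = 0 := by
  have hcrit : ∀ u ∈ unitDigits, u ∈ carries ∧ critCarries 0 u = 0 := by decide +kernel
  simpa [hcrit u hu] using critCount_gβ_mul_le ht (hcrit u hu).1

lemma critCount_gβ_mul_corner_le (ht : IsNafValue t N) (hu : u ∈ unitDigits) :
    critCount (gβ * t) N ((1 - gI) * u) ≤ critCount t N (-u) := by
  have hcrit : ∀ u ∈ unitDigits,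
      (1 - gI) * u ∈ carries ∧ critCarries 0 ((1 - gI) * u) = {-u} := by decide +kernel
  simpa [hcrit u hu] using critCount_gβ_mul_le ht (hcrit u hu).1

end ZeroBlock

section UnitBlock

variable {s t : GaussianInt} {N : ℕ}

lemma critCount_unit_add_le {c : GaussianInt} {S : Multiset GaussianInt} (hs : s ∈ unitDigits)
    (ht : IsNafValue t N) (hc : c ∈ carries) (hS : critCarries s c = S) :
    critCount (s + gβ ^ 3 * t) (N + 1) c ≤ (S.map (critCount t N)).sum := by
  have hs0 := ne_zero_of_mem_unitDigits s hs
  simpa [blockLength, hs0, gweight_singleton_of_ne_zero hs0, hS] using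
    critCount_block_le (mem_gD_iff.2 (.inr hs)) ht hc

lemma critCount_unit_add_zero_le (hs : s ∈ unitDigits) (ht : IsNafValue t N) :
    critCount (s + gβ ^ 3 * t) (N + 1) 0
      ≤ critCount t N 0 + 2 * critCount t N s + 2 * critCount t N (-(gI * s))
        + critCount t N ((1 - gI) * s) := by
  have hcrit : ∀ s ∈ unitDigits, 0 ∈ carries ∧
      critCarries s 0 = {0, s, s, -(gI * s), -(gI * s), (1 - gI) * s} := by decide +kernel
  refine (critCount_unit_add_le hs ht (hcrit s hs).1 (hcrit s hs).2).trans_eq ?_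
  simp only [Multiset.insert_eq_cons, Multiset.map_cons, Multiset.map_singleton,
    Multiset.sum_cons, Multiset.sum_singleton]
  ring

lemma critCount_unit_add_self_le (hs : s ∈ unitDigits) (ht : IsNafValue t N) :
    critCount (s + gβ ^ 3 * t) (N + 1) s
      ≤ critCount t N s + critCount t N (-(gI * s)) + critCount t N ((1 - gI) * s) := by
  have hcrit : ∀ s ∈ unitDigits, s ∈ carries ∧
      critCarries s s = {s, -(gI * s), (1 - gI) * s} := by decide +kernel
  simpa [add_assoc] using critCount_unit_add_le hs ht (hcrit s hs).1 (hcrit s hs).2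

lemma critCount_unit_add_gI_mul_le (hs : s ∈ unitDigits) (ht : IsNafValue t N) :
    critCount (s + gβ ^ 3 * t) (N + 1) (gI * s) ≤ critCount t N s := by
  have hcrit : ∀ s ∈ unitDigits, gI * s ∈ carries ∧
      critCarries s (gI * s) = {s} := by decide +kernel
  simpa using critCount_unit_add_le hs ht (hcrit s hs).1 (hcrit s hs).2

lemma critCount_unit_add_neg_le (hs : s ∈ unitDigits) (ht : IsNafValue t N) :
    critCount (s + gβ ^ 3 * t) (N + 1) (-s) ≤ critCount t N 0 := by
  have hcrit : ∀ s ∈ unitDigits, -s ∈ carries ∧ critCarries s (-s) = {0} := by decide +kernel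
  simpa using critCount_unit_add_le hs ht (hcrit s hs).1 (hcrit s hs).2

lemma critCount_unit_add_neg_gI_mul_le (hs : s ∈ unitDigits) (ht : IsNafValue t N) :
    critCount (s + gβ ^ 3 * t) (N + 1) (-(gI * s)) ≤ critCount t N (-(gI * s)) := by
  have hcrit : ∀ s ∈ unitDigits, -(gI * s) ∈ carries ∧
      critCarries s (-(gI * s)) = {-(gI * s)} := by decide +kernel
  simpa using critCount_unit_add_le hs ht (hcrit s hs).1 (hcrit s hs).2

lemma critCount_unit_add_corner_le (hs : s ∈ unitDigits) (ht : IsNafValue t N) :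
    critCount (s + gβ ^ 3 * t) (N + 1) ((1 - gI) * s) ≤ critCount t N (-(gI * s)) := by
  have hcrit : ∀ s ∈ unitDigits, (1 - gI) * s ∈ carries ∧
      critCarries s ((1 - gI) * s) = {-(gI * s)} := by decide +kernel
  simpa using critCount_unit_add_le hs ht (hcrit s hs).1 (hcrit s hs).2

lemma critCount_unit_add_corner_gI_mul_le (hs : s ∈ unitDigits) (ht : IsNafValue t N) :
    critCount (s + gβ ^ 3 * t) (N + 1) ((1 - gI) * (gI * s)) ≤ critCount t N s := by
  have hcrit : ∀ s ∈ unitDigits, (1 - gI) * (gI * s) ∈ carries ∧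
      critCarries s ((1 - gI) * (gI * s)) = {s} := by decide +kernel
  simpa using critCount_unit_add_le hs ht (hcrit s hs).1 (hcrit s hs).2

lemma critCount_unit_add_neg_corner (hs : s ∈ unitDigits) (ht : IsNafValue t N) :
    critCount (s + gβ ^ 3 * t) (N + 1) (-((1 - gI) * s)) = 0 := by
  have hcrit : ∀ s ∈ unitDigits, -((1 - gI) * s) ∈ carries ∧
      critCarries s (-((1 - gI) * s)) = 0 := by decide +kernel
  simpa using critCount_unit_add_le hs ht (hcrit s hs).1 (hcrit s hs).2

lemma critCount_unit_add_neg_corner_gI_mul (hs : s ∈ unitDigits) (ht : IsNafValue t N) :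
    critCount (s + gβ ^ 3 * t) (N + 1) (-((1 - gI) * (gI * s))) = 0 := by
  have hcrit : ∀ s ∈ unitDigits, -((1 - gI) * (gI * s)) ∈ carries ∧
      critCarries s (-((1 - gI) * (gI * s))) = 0 := by decide +kernel
  simpa using critCount_unit_add_le hs ht (hcrit s hs).1 (hcrit s hs).2

end UnitBlock

/-! ### Linear bounds along a 3-NAF -/

/-- The sequence `r` shifted by one, `rprev N = r_{N-1}`, with `r_{-1} = 0`. -/
def rprev : ℕ → ℕ
  | 0 => 0
  | n + 1 => rseq n

lemma rprev_recurrence (n : ℕ) :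
    rprev (n + 6) = rprev (n + 5) + 2 * rprev (n + 4) + 2 * rprev (n + 3) := rfl

lemma le_rprev_add_three (N : ℕ) :
    rprev (N + 2) + 2 * rprev (N + 1) + 2 * rprev N ≤ rprev (N + 3) := by
  match N with
  | 0 | 1 | 2 => decide
  | n + 3 => exact (rprev_recurrence n).ge

lemma rprev_add_three_le (N : ℕ) :
    rprev (N + 3) ≤ rprev (N + 2) + 2 * rprev (N + 1) + 3 * rprev N := by
  match N with
  | 0 | 1 | 2 => decide
  | n + 3 => linarith [rprev_recurrence n]

lemma two_mul_rprev_add_three_add_le (N : ℕ) :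
    2 * rprev (N + 3) + 3 * rprev (N + 1) + rprev N ≤ rprev (N + 4) + rprev (N + 2) := by
  match N with
  | 0 | 1 | 2 | 3 | 4 => decide
  | n + 5 =>
    have hmono : rprev (n + 3) ≤ rprev (n + 4) := by linarith [le_rprev_add_three (n + 1)]
    linarith [rprev_recurrence n, rprev_recurrence (n + 1), rprev_recurrence (n + 2),
      rprev_recurrence (n + 3)]

/-- The linear inequalities propagated along a 3-NAF of weight `N`, where `a c` is the critical
count at the carry `c`. The bound `adjacent` is the one that the induction step of `total` at
`u = s` requires. -/
structure CritBounds (a : GaussianInt → ℕ) (N : ℕ) : Prop where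
  zero : a 0 ≤ rprev (N + 1)
  unit : ∀ u ∈ unitDigits, a u ≤ rprev N
  adjacent : ∀ u ∈ unitDigits,
    rprev (N + 2) + 3 * rprev N + 2 * (a u + a (-(gI * u)) + a ((1 - gI) * u)) ≤ rprev (N + 3)
  total : ∀ u ∈ unitDigits,
    a 0 + 2 * a u + 2 * a (-(gI * u)) + a ((1 - gI) * u) ≤ rprev (N + 2)

lemma critBounds_zero : CritBounds (critCount 0 0) 0 := by
  have h0 : critCount 0 0 0 ≤ 1 := repCount_zero_le_one _
  have hne : ∀ c, c ≠ 0 → critCount 0 0 c = 0 := fun c hc => by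
    have hk : 0 + 1 - deficit c = 0 := by have := deficit_pos hc; omega
    rw [critCount, hk, repCount_zero_right]
  have hunit : ∀ u ∈ unitDigits, critCount 0 0 u = 0 :=
    fun u hu => hne u (ne_zero_of_mem_unitDigits u hu)
  have hrot : ∀ u ∈ unitDigits, critCount 0 0 (-(gI * u)) = 0 :=
    fun u hu => hunit _ (neg_mem_unitDigits _ (gI_mul_mem_unitDigits u hu))
  have hcorner : ∀ u ∈ unitDigits, critCount 0 0 ((1 - gI) * u) = 0 :=
    fun u hu => hne _ (mul_ne_zero (by decide) (ne_zero_of_mem_unitDigits u hu))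
  exact
    { zero := h0
      unit := fun u hu => (hunit u hu).le
      adjacent := fun u hu => by
        rw [hunit u hu, hrot u hu, hcorner u hu]
        decide
      total := fun u hu => by
        rw [hunit u hu, hrot u hu, hcorner u hu]
        exact h0 }

lemma CritBounds.gβ_mul {t : GaussianInt} {N : ℕ} (hb : CritBounds (critCount t N) N)
    (ht : IsNafValue t N) : CritBounds (critCount (gβ * t) N) N := by
  have h0 := critCount_gβ_mul_zero_le ht
  have hunit : ∀ u ∈ unitDigits, critCount (gβ * t) N u = 0 :=
    fun u hu => critCount_gβ_mul_unit ht hu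
  have hrot : ∀ u ∈ unitDigits, critCount (gβ * t) N (-(gI * u)) = 0 :=
    fun u hu => hunit _ (neg_mem_unitDigits _ (gI_mul_mem_unitDigits u hu))
  refine ⟨h0.trans hb.zero, fun u hu => ?_, fun u hu => ?_, fun u hu => ?_⟩
  · simp [hunit u hu]
  all_goals
    rw [hunit u hu, hrot u hu]
    have hcorner := critCount_gβ_mul_corner_le ht hu
    have hadj := hb.adjacent _ (neg_mem_unitDigits u hu)
    have htot := hb.total _ (neg_mem_unitDigits u hu)
    omega

lemma CritBounds.unit_add {s t : GaussianInt} {N : ℕ} (hb : CritBounds (critCount t N) N)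
    (hs : s ∈ unitDigits) (ht : IsNafValue t N) :
    CritBounds (critCount (s + gβ ^ 3 * t) (N + 1)) (N + 1) := by
  have hzero := critCount_unit_add_zero_le hs ht
  have hself := critCount_unit_add_self_le hs ht
  have hgI := critCount_unit_add_gI_mul_le hs ht
  have hneg := critCount_unit_add_neg_le hs ht
  have hneg_gI := critCount_unit_add_neg_gI_mul_le hs ht
  have hcorner := critCount_unit_add_corner_le hs ht
  have hcorner_gI := critCount_unit_add_corner_gI_mul_le hs ht
  have hneg_corner := critCount_unit_add_neg_corner hs ht
  have hneg_corner_gI := critCount_unit_add_neg_corner_gI_mul hs ht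
  have ha_zero := hb.zero
  have ha_self := hb.unit s hs
  have ha_neg_gI := hb.unit _ (neg_mem_unitDigits _ (gI_mul_mem_unitDigits s hs))
  have ha_adj := hb.adjacent s hs
  have ha_total := hb.total s hs
  have hr := le_rprev_add_three N
  have hr' := rprev_add_three_le N
  have hr'' := two_mul_rprev_add_three_add_le N
  refine ⟨hzero.trans ha_total, fun u hu => ?_, fun u hu => ?_, fun u hu => ?_⟩
  · rcases eq_rotation_of_mem_unitDigits s hs u hu with rfl | rfl | rfl | rfl <;> omega
  all_goals
    rcases eq_rotation_of_mem_unitDigits s hs u hu with rfl | rfl | rfl | rfl <;>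
    simp only [mul_neg, neg_neg, gI_mul_gI_mul, Nat.add_assoc, Nat.reduceAdd] <;>
    omega

lemma IsNafValue.critBounds {z : GaussianInt} {N : ℕ} (hz : IsNafValue z N) :
    CritBounds (critCount z N) N := by
  induction hz with
  | zero => exact critBounds_zero
  | @block t s N hs ht ih =>
    rcases mem_gD_iff.1 hs with rfl | hs
    · simpa [blockLength, gweight_singleton_zero] using ih.gβ_mul ht
    · have hs0 := ne_zero_of_mem_unitDigits s hs
      simpa [blockLength, hs0, gweight_singleton_of_ne_zero hs0] using ih.unit_add hs ht

/-! ### Block decomposition of a 3-NAF -/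

lemma gNAF.tail {W : ℕ} {l : List GaussianInt} (h : gNAF W l) : gNAF W l.tail := by
  cases l with
  | nil => exact h
  | cons d l =>
    intro j k hjk hk hj
    simpa using h (j + 1) (k + 1) (by omega) (by omega) (by simpa using hj)

lemma gval_eq_gβ_mul_gval_tail {l : List GaussianInt} (h : l.getD 0 0 = 0) :
    gval l = gβ * gval l.tail := by
  cases l with
  | nil => simp [gval]
  | cons d l =>
    obtain rfl : d = 0 := by simpa using h
    rw [gval_cons, zero_add, List.tail_cons]

lemma gweight_eq_gweight_tail {l : List GaussianInt} (h : l.getD 0 0 = 0) :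
    gweight l = gweight l.tail := by
  cases l with
  | nil => rfl
  | cons d l =>
    obtain rfl : d = 0 := by simpa using h
    rw [gweight_cons, gweight_singleton_zero, add_zero, List.tail_cons]

lemma gNAF.isNafValue {l : List GaussianInt} (hnaf : gNAF 3 l) (hD : ∀ d ∈ l, d ∈ gD) :
    IsNafValue (gval l) (gweight l) := by
  induction hlen : l.length using Nat.strong_induction_on generalizing l with
  | _ n ih =>
    subst hlen
    match l with
    | [] => exact .zero
    | d :: l =>
      have hd : d ∈ gD := hD d List.mem_cons_self
      have hDl : ∀ e ∈ l, e ∈ gD := fun e he => hD e (List.mem_cons_of_mem _ he)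
      rw [gweight_cons]
      by_cases hd0 : d = 0
      · subst hd0
        simpa [gval_cons, blockLength] using
          IsNafValue.block hd (ih l.length (by simp) hnaf.tail hDl rfl)
      have h0 : l.getD 0 0 = 0 := by
        simpa using hnaf 0 1 (by omega) (by omega) (by simpa using hd0)
      have h1 : l.tail.getD 0 0 = 0 := by
        simpa using hnaf 0 2 (by omega) (by omega) (by simpa using hd0)
      have ht : IsNafValue (gval l.tail.tail) (gweight l.tail.tail) :=
        ih l.tail.tail.length (by simp only [List.length_tail, List.length_cons]; omega)
          hnaf.tail.tail.tail
          (fun e he => hDl e (List.mem_of_mem_tail (List.mem_of_mem_tail he))) rfl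
      have hval : gval (d :: l) = d + gβ ^ blockLength d * gval l.tail.tail := by
        rw [gval_cons, gval_eq_gβ_mul_gval_tail h0, gval_eq_gβ_mul_gval_tail h1, blockLength,
          if_neg hd0]
        ring
      rw [hval, gweight_eq_gweight_tail h0, gweight_eq_gweight_tail h1]
      exact .block hd ht

/-- If the 3-NAF representation of `x` has exactly `N ≥ 1` nonzero digits,
then `x` has at most `r_N` optimal representations. -/
theorem stmt8 (N : ℕ) (hN : 1 ≤ N) (x : GaussianInt) (l : List GaussianInt)
    (hrep : gIsRep x l) (hnaf : gNAF 3 l) (hw : gweight l = N) :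
    gnumOpt x ≤ rseq N := by
  have hx : IsNafValue x N := by
    simpa only [hrep.2, hw] using hnaf.isNafValue hrep.1
  have hsub : {l' | gOptimal x l'} ⊆ repSet x (N + 1) := fun l' ⟨hrep', hn, hmin⟩ =>
    ⟨hrep', hn, Nat.lt_succ_of_le (hw ▸ hmin l hrep)⟩
  calc gnumOpt x ≤ repCount x (N + 1) := Set.ncard_le_ncard hsub (repSet_finite _ _)
    _ = critCount x N 0 := by simp [critCount, deficit]
    _ ≤ rseq N := hx.critBounds.zero
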